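/- arXiv:0907.1792 — 2 statements merged into one kernel-verified Lean document; each statement's English description precedes it below -/
import Mathlib

section
/- Let E be a positive operator measure on the Borel sets of ℝ with values in the bounded operators on L²(ℝ) satisfying translation covariance, e^{-itP} E(B) e^{itP} = E(B+t) for all Borel B and t ∈ ℝ, where (e^{-itP}ψ)(x) := ψ(x−t), and velocity boost invariance, e^{itQ} E(B) e^{-itQ} = E(B) for all B and t, where e^{itQ} is multiplication by x ↦ e^{itx}. Let T : ℝ → ℂ be measurable and admit an extension T̃ : {ω ∈ ℂ : Im ω ≥ 0} → ℂ analytic on {Im ω > 0}, with |T̃(ω)| ≤ 1 everywhere and lim_{b→0+} T̃(k+ib) = T(k) for almost all k ∈ ℝ. Then for every a ∈ ℝ, T(P)* E([a,∞)) T(P) ≤ E([a,∞)), where T(P) := F* T(M) F and T(M) is multiplication by T. -/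
open MeasureTheory Complex Filter Set
open scoped ENNReal NNReal

noncomputable section

/-- `L²(ℝ)` with respect to Lebesgue measure. -/
abbrev H2 : Type := Lp ℂ 2 (volume : Measure ℝ)

/-- `𝓕` is the Fourier–Plancherel operator: a unitary on `L²(ℝ)` which is given on
`L¹ ∩ L²` by the usual integral formula `(𝓕φ)(y) = (2π)^{-1/2} ∫ e^{-iyx} φ(x) dx`, and whose
inverse `𝓕* = 𝓕⁻¹` is given on `L¹ ∩ L²` by `(𝓕*φ)(y) = (2π)^{-1/2} ∫ e^{iyx} φ(x) dx`. -/
def IsFourier (𝓕 : H2 ≃ₗᵢ[ℂ] H2) : Prop :=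
  (∀ φ : H2, Integrable (⇑φ) volume →
      (⇑(𝓕 φ) : ℝ → ℂ) =ᵐ[volume]
        fun y : ℝ => (Real.sqrt (2 * Real.pi) : ℂ)⁻¹ *
          ∫ x : ℝ, Complex.exp (-(Complex.I * y * x)) * φ x) ∧
  (∀ φ : H2, Integrable (⇑φ) volume →
      (⇑(𝓕.symm φ) : ℝ → ℂ) =ᵐ[volume]
        fun y : ℝ => (Real.sqrt (2 * Real.pi) : ℂ)⁻¹ *
          ∫ x : ℝ, Complex.exp (Complex.I * y * x) * φ x)

/-- The multiplication operator `g(M)` on `L²`: `φ ↦ g·φ` (pointwise product), defined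
whenever the product is again in `L²`. -/
def mulLp {μ : Measure ℝ} (g : ℝ → ℂ) (φ : Lp ℂ 2 μ) : Lp ℂ 2 μ := by
  classical exact if h : MemLp (fun x => g x * φ x) 2 μ then h.toLp _ else 0

/-- `gt` is an extension of `g : ℝ → ℂ` to the closed upper half-plane which is analytic on the
open upper half-plane, bounded by one there, and has non-tangential boundary values `g` a.e. -/
structure HardyExt (g : ℝ → ℂ) (gt : ℂ → ℂ) : Prop where
  agree : ∀ a : ℝ, gt (a : ℂ) = g a
  analytic : DifferentiableOn ℂ gt {ω : ℂ | 0 < ω.im}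
  bounded : ∀ ω : ℂ, 0 ≤ ω.im → ‖gt ω‖ ≤ 1
  boundary : ∀ᵐ a : ℝ ∂volume,
    Tendsto (fun b : ℝ => gt ((a : ℂ) + b * Complex.I)) (nhdsWithin 0 (Ioi 0)) (nhds (g a))

/-- A positive operator measure (POM) on the Borel sets of `ℝ` with values in the bounded
operators on a Hilbert space `K`: `0 ≤ E(B) ≤ I`, `E(∅) = 0`, and `E` is σ-additive in the
strong operator topology. -/
structure POM (K : Type) [NormedAddCommGroup K] [InnerProductSpace ℂ K] [CompleteSpace K] where
  toFun : Set ℝ → K →L[ℂ] K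
  pos : ∀ B : Set ℝ, (toFun B).IsPositive
  le_one : ∀ B : Set ℝ, (ContinuousLinearMap.id ℂ K - toFun B).IsPositive
  empty : toFun ∅ = 0
  sigma_additive : ∀ f : ℕ → Set ℝ, (∀ n, MeasurableSet (f n)) →
    Pairwise (Function.onFun Disjoint f) →
    ∀ φ : K, HasSum (fun n => toFun (f n) φ) (toFun (⋃ n, f n) φ)

/-- The translation operator `e^{-itP}` on `L²(ℝ)`: `(e^{-itP}ψ)(x) = ψ(x − t)`. -/
def transLp (t : ℝ) (φ : H2) : H2 := by
  classical exact
    if h : MemLp (fun x : ℝ => φ (x - t)) 2 (volume : Measure ℝ) then h.toLp _ else 0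

/-!
In momentum space the translation `e^{ihP}` is multiplication by `w = e^{ihk}`. For `h > 0`,
covariance turns `A = E([a, ∞))` into `E([a + h, ∞)) ≤ A`, so `e^{ihP}` is a contraction for the
semi-inner product `⟪A ·, ·⟫`. Von Neumann's inequality holds for such a contraction `S`: the form
`D = A - S†AS` is positive, `⟪A x, x⟫` is the telescoping sum of `⟪D Sⁿx, Sⁿx⟫` once `S` is damped
by a factor less than one, and Parseval's identity on `ℤ/N` bounds the effect of a polynomial on
such sums by its maximum on the circle. Hence `f(e^{ihP})` is again a contraction for
every `f` holomorphic on a neighbourhood of the closed disc and bounded by one on it.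

For `b > 0`, take `f` such that `f(w) = T̃(κ)` with `κ = (2i/h)(1 - rw)/(1 + rw)` and `r = e^{-hb}`.
Since `rw = e^{ih(k+ib)}`, the point `κ` lies in the upper half-plane and tends to `k + ib` as
`h → 0`. Letting `h → 0` and then `b → 0`, dominated convergence gives the inequality for `T(P)`.
-/

lemma reApplyInnerSelf_adjoint_conj {H H' : Type*} [NormedAddCommGroup H]
    [InnerProductSpace ℂ H] [CompleteSpace H] [NormedAddCommGroup H'] [InnerProductSpace ℂ H']
    [CompleteSpace H'] (A : H →L[ℂ] H) (U : H' →L[ℂ] H) (x : H') :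
    (U.adjoint ∘L A ∘L U).reApplyInnerSelf x = A.reApplyInnerSelf (U x) :=
  congrArg Complex.re (U.adjoint_inner_left _ _)

section VonNeumann

open Polynomial

variable {H : Type*} [NormedAddCommGroup H] [InnerProductSpace ℂ H]

lemma sum_reApplyInnerSelf_dft (D : H →L[ℂ] H) {N : ℕ} [NeZero N] (z : ZMod N → H) :
    ∑ k, D.reApplyInnerSelf (ZMod.dft z k) = N * ∑ l, D.reApplyInnerSelf (z l) := by
  have inner_term (k l m : ZMod N) :
      inner ℂ (D (ZMod.stdAddChar (-(l * k)) • z l)) (ZMod.stdAddChar (-(m * k)) • z m) =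
        ZMod.stdAddChar (k * (l - m)) * inner ℂ (D (z l)) (z m) := by
    rw [map_smul, inner_smul_left, inner_smul_right, ← mul_assoc, ← AddChar.map_neg_eq_conj,
      ← AddChar.map_add_eq_mul]
    congr 2
    ring
  have orthogonality (l m : ZMod N) :
      ∑ k, ZMod.stdAddChar (k * (l - m)) * inner ℂ (D (z l)) (z m) =
        if l = m then N * inner ℂ (D (z l)) (z m) else 0 := by
    rw [← Finset.sum_mul, AddChar.sum_mulShift _ (ZMod.isPrimitive_stdAddChar N), ZMod.card]
    simp only [sub_eq_zero, ite_mul, zero_mul, Nat.cast_ite, Nat.cast_zero]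
  have complex_identity :
      ∑ k, inner ℂ (D (ZMod.dft z k)) (ZMod.dft z k) = N * ∑ l, inner ℂ (D (z l)) (z l) := by
    simp_rw [ZMod.dft_apply, map_sum, sum_inner, inner_sum, inner_term]
    rw [Finset.sum_comm, Finset.mul_sum]
    refine Finset.sum_congr rfl fun l _ ↦ ?_
    rw [Finset.sum_comm]
    simp_rw [orthogonality, Finset.sum_ite_eq, Finset.mem_univ, if_true]
  simpa [ContinuousLinearMap.reApplyInnerSelf_apply] using congrArg Complex.re complex_identity

lemma dft_polynomial_sum_smul_add {N : ℕ} [NeZero N] (p : ℂ[X]) (z : ZMod N → H) (k : ZMod N) :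
    ZMod.dft (fun l : ZMod N ↦ p.sum fun j c ↦ c • z (l + j)) k =
      p.eval (ZMod.stdAddChar k) • ZMod.dft z k := by
  have dft_translate (j : ℕ) :
      ZMod.dft (fun l : ZMod N ↦ z (l + j)) k = ZMod.stdAddChar k ^ j • ZMod.dft z k := by
    rw [ZMod.dft_apply, ZMod.dft_apply, Finset.smul_sum,
      ← Equiv.sum_comp (Equiv.addRight (j : ZMod N))
        (fun l ↦ ZMod.stdAddChar k ^ j • ZMod.stdAddChar (-(l * k)) • z l)]
    refine Finset.sum_congr rfl fun l _ ↦ ?_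
    rw [Equiv.coe_addRight, smul_smul, ← AddChar.map_nsmul_eq_pow, ← AddChar.map_add_eq_mul,
      nsmul_eq_mul]
    congr 2
    ring
  have dft_sum : ZMod.dft (fun l : ZMod N ↦ p.sum fun j c ↦ c • z (l + j)) =
      p.sum fun j c ↦ c • ZMod.dft (fun l : ZMod N ↦ z (l + j)) := by
    simp_rw [sum_def, ← map_smul, ← map_sum]
    congr 1
    ext l
    simp
  rw [dft_sum, sum_def, Finset.sum_apply, eval_eq_sum, sum_def, Finset.sum_smul]
  refine Finset.sum_congr rfl fun j _ ↦ ?_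
  rw [Pi.smul_apply, dft_translate, smul_smul]

variable {p : ℂ[X]}

lemma sum_reApplyInnerSelf_polynomial_sum_le {D : H →L[ℂ] H}
    (hD : ∀ x, 0 ≤ D.reApplyInnerSelf x) (hp : ∀ w : ℂ, ‖w‖ = 1 → ‖p.eval w‖ ≤ 1)
    {N : ℕ} [NeZero N] (z : ZMod N → H) :
    ∑ l, D.reApplyInnerSelf (p.sum fun j c ↦ c • z (l + j)) ≤
      ∑ l, D.reApplyInnerSelf (z l) := by
  have hN : (0 : ℝ) < N := Nat.cast_pos.2 (NeZero.pos N)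
  refine le_of_mul_le_mul_left ?_ hN
  rw [← sum_reApplyInnerSelf_dft, ← sum_reApplyInnerSelf_dft]
  refine Finset.sum_le_sum fun k _ ↦ ?_
  rw [dft_polynomial_sum_smul_add, ContinuousLinearMap.reApplyInnerSelf_smul]
  exact mul_le_of_le_one_left (hD _)
    (pow_le_one₀ (norm_nonneg _) (hp _ (AddChar.norm_apply _ k)))

lemma sum_range_reApplyInnerSelf_polynomial_sum_le {D : H →L[ℂ] H}
    (hD : ∀ x, 0 ≤ D.reApplyInnerSelf x) (hp : ∀ w : ℂ, ‖w‖ = 1 → ‖p.eval w‖ ≤ 1)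
    (x : ℕ → H) (K : ℕ) :
    ∑ n ∈ Finset.range K, D.reApplyInnerSelf (p.sum fun j c ↦ c • x (n + j)) ≤
      ∑ n ∈ Finset.range (K + p.natDegree + 1), D.reApplyInnerSelf (x n) := by
  set N := K + p.natDegree + 1
  let z : ZMod N → H := fun l ↦ x l.val
  let y : ZMod N → H := fun l : ZMod N ↦ p.sum fun j c ↦ c • z (l + j)
  have sum_eq_sum_range (F : ZMod N → ℝ) : ∑ l, F l = ∑ n ∈ Finset.range N, F n := by
    rw [← Fin.sum_univ_eq_sum_range (fun n ↦ F n)]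
    exact Finset.sum_congr rfl fun l _ ↦ congrArg F (ZMod.natCast_zmod_val (n := N) l).symm
  have no_wraparound {n : ℕ} (hn : n < K) :
      y n = p.sum fun j c ↦ c • x (n + j) := by
    refine Finset.sum_congr rfl fun j hj ↦ ?_
    have := le_natDegree_of_mem_supp j hj
    simp only [z, ← Nat.cast_add, ZMod.val_cast_of_lt (show n + j < N by omega)]
  calc ∑ n ∈ Finset.range K, D.reApplyInnerSelf (p.sum fun j c ↦ c • x (n + j))
      = ∑ n ∈ Finset.range K, D.reApplyInnerSelf (y n) :=
        Finset.sum_congr rfl fun n hn ↦ by rw [no_wraparound (Finset.mem_range.1 hn)]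
    _ ≤ ∑ n ∈ Finset.range N, D.reApplyInnerSelf (y n) :=
        Finset.sum_le_sum_of_subset_of_nonneg (Finset.range_mono (by omega)) fun _ _ _ ↦ hD _
    _ = ∑ l, D.reApplyInnerSelf (y l) := (sum_eq_sum_range fun l ↦ D.reApplyInnerSelf (y l)).symm
    _ ≤ ∑ l, D.reApplyInnerSelf (z l) := sum_reApplyInnerSelf_polynomial_sum_le hD hp z
    _ = ∑ n ∈ Finset.range N, D.reApplyInnerSelf (x n) := by
        rw [sum_eq_sum_range]
        refine Finset.sum_congr rfl fun n hn ↦ ?_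
        simp only [z, ZMod.val_cast_of_lt (Finset.mem_range.1 hn)]

variable [CompleteSpace H] {A S : H →L[ℂ] H}

lemma reApplyInnerSelf_aeval_le_of_tendsto_zero (hA : ∀ x, 0 ≤ A.reApplyInnerSelf x)
    (hS : ∀ x, A.reApplyInnerSelf (S x) ≤ A.reApplyInnerSelf x)
    (hS_stable : ∀ x, Tendsto (fun n ↦ A.reApplyInnerSelf ((S ^ n) x)) atTop (nhds 0))
    (hp : ∀ w : ℂ, ‖w‖ = 1 → ‖p.eval w‖ ≤ 1) (x : H) :
    A.reApplyInnerSelf (aeval S p x) ≤ A.reApplyInnerSelf x := by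
  let D : H →L[ℂ] H := A - S.adjoint ∘L A ∘L S
  have reApplyInnerSelf_D (v : H) :
      D.reApplyInnerSelf v = A.reApplyInnerSelf v - A.reApplyInnerSelf (S v) := by
    simp [D, ContinuousLinearMap.reApplyInnerSelf_apply, inner_sub_left,
      ContinuousLinearMap.adjoint_inner_left]
  have hD (v : H) : 0 ≤ D.reApplyInnerSelf v := by
    rw [reApplyInnerSelf_D]
    exact sub_nonneg.2 (hS v)
  have telescope (v : H) (n : ℕ) : ∑ i ∈ Finset.range n, D.reApplyInnerSelf ((S ^ i) v) =
      A.reApplyInnerSelf v - A.reApplyInnerSelf ((S ^ n) v) := by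
    simpa [reApplyInnerSelf_D, pow_succ'] using
      Finset.sum_range_sub' (fun i ↦ A.reApplyInnerSelf ((S ^ i) v)) n
  have pow_aeval (n : ℕ) : (S ^ n) (aeval S p x) =
      p.sum fun j c ↦ c • (S ^ (n + j)) x := by
    simp [aeval_def, eval₂_eq_sum, sum_def, ← Algebra.smul_def, pow_add]
  have finite_bound (K : ℕ) : A.reApplyInnerSelf (aeval S p x) -
      A.reApplyInnerSelf ((S ^ K) (aeval S p x)) ≤ A.reApplyInnerSelf x := by
    have window := sum_range_reApplyInnerSelf_polynomial_sum_le hD hp (fun n ↦ (S ^ n) x) K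
    simp_rw [← pow_aeval] at window
    rw [telescope, telescope] at window
    linarith [hA ((S ^ (K + p.natDegree + 1)) x)]
  have := (hS_stable (aeval S p x)).const_sub (A.reApplyInnerSelf (aeval S p x))
  rw [sub_zero] at this
  exact le_of_tendsto' this finite_bound

/-- Von Neumann's inequality for the semi-inner product `⟪A ·, ·⟫`; it becomes the usual one
for `A = 1`. -/
theorem reApplyInnerSelf_aeval_le (hA : ∀ x, 0 ≤ A.reApplyInnerSelf x)
    (hS : ∀ x, A.reApplyInnerSelf (S x) ≤ A.reApplyInnerSelf x)
    (hp : ∀ w : ℂ, ‖w‖ = 1 → ‖p.eval w‖ ≤ 1) (x : H) :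
    A.reApplyInnerSelf (aeval S p x) ≤ A.reApplyInnerSelf x := by
  have hSpow (n : ℕ) (v : H) : A.reApplyInnerSelf ((S ^ n) v) ≤ A.reApplyInnerSelf v := by
    induction n with
    | zero => simp
    | succ n ih =>
      rw [pow_succ', mul_apply_eq_comp]
      exact (hS _).trans ih
  have damped (ρ : ℝ) (hρ : ρ ∈ Ioo (0 : ℝ) 1) :
      A.reApplyInnerSelf (aeval ((ρ : ℂ) • S) p x) ≤ A.reApplyInnerSelf x := by
    have hρ_norm : ‖(ρ : ℂ)‖ = ρ := by rw [Complex.norm_real, Real.norm_of_nonneg hρ.1.le]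
    refine reApplyInnerSelf_aeval_le_of_tendsto_zero hA (fun v ↦ ?_) (fun v ↦ ?_) hp x
    · rw [smul_apply, ContinuousLinearMap.reApplyInnerSelf_smul, hρ_norm]
      exact (mul_le_of_le_one_left (hA _) (pow_le_one₀ hρ.1.le hρ.2.le)).trans (hS v)
    · have decay : Tendsto (fun n ↦ (ρ ^ n) ^ 2 * A.reApplyInnerSelf v) atTop (nhds 0) := by
        simpa using ((tendsto_pow_atTop_nhds_zero_of_lt_one hρ.1.le hρ.2).pow 2).mul_const
          (A.reApplyInnerSelf v)
      refine squeeze_zero (fun n ↦ hA _) (fun n ↦ ?_) decay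
      rw [_root_.smul_pow, smul_apply, ContinuousLinearMap.reApplyInnerSelf_smul, norm_pow, hρ_norm]
      exact mul_le_mul_of_nonneg_left (hSpow n v) (by positivity)
  have hcont : Continuous fun ρ : ℝ ↦ A.reApplyInnerSelf (aeval ((ρ : ℂ) • S) p x) :=
    A.reApplyInnerSelf_continuous.comp <|
      (p.continuous_aeval.comp (by fun_prop : Continuous fun ρ : ℝ ↦ (ρ : ℂ) • S)).clm_apply
        continuous_const
  have hlim := hcont.continuousWithinAt.tendsto (x := (1 : ℝ)) (s := Iio 1)
  rw [ofReal_one, one_smul] at hlim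
  refine le_of_tendsto hlim ?_
  filter_upwards [Ioo_mem_nhdsLT zero_lt_one] using damped

end VonNeumann

section Multiplication

variable {μ : Measure ℝ} {g w : ℝ → ℂ}

lemma mulLp_eq_of_ae_eq {φ ψ : Lp ℂ 2 μ} (h : ψ =ᵐ[μ] fun x ↦ g x * φ x) : mulLp g φ = ψ := by
  have hmem : MemLp (fun x ↦ g x * φ x) 2 μ := (Lp.memLp ψ).ae_eq h
  rw [mulLp, dif_pos hmem]
  exact Lp.ext (hmem.coeFn_toLp.trans h.symm)

/-- Multiplication by an essentially bounded function, as a bounded operator on `L²`; it agrees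
with `mulLp`. -/
def mulLpL (g : ℝ → ℂ) (hg : MemLp g ∞ μ) : Lp ℂ 2 μ →L[ℂ] Lp ℂ 2 μ :=
  (ContinuousLinearMap.mul ℂ ℂ).holderL μ ∞ 2 2 (hg.toLp g)

lemma coeFn_mulLpL (hg : MemLp g ∞ μ) (φ : Lp ℂ 2 μ) :
    mulLpL g hg φ =ᵐ[μ] fun x ↦ g x * φ x := by
  filter_upwards [(ContinuousLinearMap.mul ℂ ℂ).coeFn_holder (r := 2) (hg.toLp g) φ,
    hg.coeFn_toLp] with x hx hgx
  rw [← hgx]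
  exact hx

lemma mulLp_eq_mulLpL (hg : MemLp g ∞ μ) (φ : Lp ℂ 2 μ) : mulLp g φ = mulLpL g hg φ :=
  mulLp_eq_of_ae_eq (coeFn_mulLpL hg φ)

lemma coeFn_mulLp (hg : MemLp g ∞ μ) (φ : Lp ℂ 2 μ) : mulLp g φ =ᵐ[μ] fun x ↦ g x * φ x := by
  rw [mulLp_eq_mulLpL hg]
  exact coeFn_mulLpL hg φ

lemma mulLp_eval_eq_aeval_mulLpL (hw : MemLp w ∞ μ) (p : Polynomial ℂ) (φ : Lp ℂ 2 μ) :
    mulLp (fun x ↦ p.eval (w x)) φ = Polynomial.aeval (mulLpL w hw) p φ := by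
  refine mulLp_eq_of_ae_eq ?_
  induction p using Polynomial.induction_on with
  | C c =>
    simp only [Polynomial.aeval_C, Polynomial.eval_C, Algebra.algebraMap_eq_smul_one,
      smul_apply, one_apply_eq_self]
    exact Lp.coeFn_smul c φ
  | add p q hp hq =>
    simp only [map_add, add_apply]
    filter_upwards [Lp.coeFn_add (Polynomial.aeval (mulLpL w hw) p φ)
      (Polynomial.aeval (mulLpL w hw) q φ), hp, hq] with x hadd hp hq
    rw [hadd, Pi.add_apply, hp, hq, Polynomial.eval_add, add_mul]
  | monomial n c ih =>
    rw [pow_succ', mul_left_comm, map_mul, Polynomial.aeval_X, mul_apply_eq_comp]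
    filter_upwards [coeFn_mulLpL hw (Polynomial.aeval (mulLpL w hw) (.C c * .X ^ n) φ), ih]
      with x hmul ih
    rw [hmul, ih, Polynomial.eval_mul (p := .X), Polynomial.eval_X, mul_assoc]

lemma tendsto_eLpNorm_zero_of_dominated {α E : Type*} [MeasurableSpace α] {ν : Measure α}
    [NormedAddCommGroup E] {p : ℝ≥0∞} (hp : p ≠ ∞) {F : ℕ → α → E} {bound : α → ℝ}
    (hF : ∀ n, AEStronglyMeasurable (F n) ν) (hbound : MemLp bound p ν)
    (hF_le : ∀ n, ∀ᵐ a ∂ν, ‖F n a‖ ≤ bound a)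
    (hlim : ∀ᵐ a ∂ν, Tendsto (fun n ↦ F n a) atTop (nhds 0)) :
    Tendsto (fun n ↦ eLpNorm (F n) p ν) atTop (nhds 0) := by
  rcases eq_or_ne p 0 with rfl | hp0
  · simp
  have hp_pos : 0 < p.toReal := ENNReal.toReal_pos hp0 hp
  have lintegral_tendsto :
      Tendsto (fun n ↦ ∫⁻ a, ‖F n a‖ₑ ^ p.toReal ∂ν) atTop (nhds (∫⁻ _, 0 ∂ν)) := by
    refine tendsto_lintegral_of_dominated_convergence' (fun a ↦ ‖bound a‖ₑ ^ p.toReal)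
      (fun n ↦ (hF n).enorm.pow_const _) (fun n ↦ ?_)
      (lintegral_rpow_enorm_lt_top_of_eLpNorm_lt_top hp0 hp hbound.2).ne ?_
    · filter_upwards [hF_le n] with a ha
      gcongr
      exact enorm_le_iff_norm_le.2 (ha.trans (le_abs_self _))
    · filter_upwards [hlim] with a ha
      simpa [hp_pos] using ha.enorm.ennrpow_const p.toReal
  simpa [eLpNorm_eq_lintegral_rpow_enorm_toReal hp0 hp, hp_pos] using
    lintegral_tendsto.ennrpow_const (1 / p.toReal)

lemma tendsto_mulLp {G : ℕ → ℝ → ℂ} {c : ℝ} (hG : ∀ n, AEStronglyMeasurable (G n) μ)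
    (hG_le : ∀ n, ∀ᵐ x ∂μ, ‖G n x‖ ≤ c)
    (hlim : ∀ᵐ x ∂μ, Tendsto (fun n ↦ G n x) atTop (nhds (g x))) (φ : Lp ℂ 2 μ) :
    Tendsto (fun n ↦ mulLp (G n) φ) atTop (nhds (mulLp g φ)) := by
  have hg : AEStronglyMeasurable g μ := aestronglyMeasurable_of_tendsto_ae atTop hG hlim
  have hg_le : ∀ᵐ x ∂μ, ‖g x‖ ≤ c := by
    filter_upwards [ae_all_iff.2 hG_le, hlim] with x hx hlim
    exact le_of_tendsto' hlim.norm hx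
  have coeFn_sub (n : ℕ) :
      ⇑(mulLp (G n) φ) - ⇑(mulLp g φ) =ᵐ[μ] fun x ↦ (G n x - g x) * φ x := by
    filter_upwards [coeFn_mulLp (memLp_top_of_bound (hG n) c (hG_le n)) φ,
      coeFn_mulLp (memLp_top_of_bound hg c hg_le) φ] with x hGx hgx
    rw [Pi.sub_apply, hGx, hgx, sub_mul]
  simp_rw [Lp.tendsto_Lp_iff_tendsto_eLpNorm', eLpNorm_congr_ae (coeFn_sub _)]
  refine tendsto_eLpNorm_zero_of_dominated ENNReal.ofNat_ne_top
    (fun n ↦ ((hG n).sub hg).mul (Lp.aestronglyMeasurable φ))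
    ((Lp.memLp φ).norm.const_mul (c + c)) (fun n ↦ ?_) ?_
  · filter_upwards [hG_le n, hg_le] with x hGx hgx
    rw [norm_mul]
    exact mul_le_mul_of_nonneg_right (norm_sub_le_of_le hGx hgx) (norm_nonneg _)
  · filter_upwards [hlim] with x hx
    simpa using (hx.sub_const (g x)).mul_const (φ x)

lemma reApplyInnerSelf_mulLp_le_of_tendsto {ι : Type*} {l : Filter ι} [l.NeBot]
    [l.IsCountablyGenerated] {A : Lp ℂ 2 μ →L[ℂ] Lp ℂ 2 μ} {G : ι → ℝ → ℂ} {c B : ℝ}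
    {φ : Lp ℂ 2 μ} (hG : ∀ᶠ i in l, AEStronglyMeasurable (G i) μ)
    (hG_le : ∀ᶠ i in l, ∀ᵐ x ∂μ, ‖G i x‖ ≤ c)
    (hlim : ∀ᵐ x ∂μ, Tendsto (fun i ↦ G i x) l (nhds (g x)))
    (hB : ∀ᶠ i in l, A.reApplyInnerSelf (mulLp (G i) φ) ≤ B) :
    A.reApplyInnerSelf (mulLp g φ) ≤ B := by
  obtain ⟨u, hu, hu_forall⟩ :=
    exists_seq_forall_of_frequently (hG.and (hG_le.and hB)).frequently
  have hmul : Tendsto (fun n ↦ mulLp (G (u n)) φ) atTop (nhds (mulLp g φ)) :=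
    tendsto_mulLp (fun n ↦ (hu_forall n).1) (fun n ↦ (hu_forall n).2.1)
      (hlim.mono fun x hx ↦ hx.comp hu) φ
  exact le_of_tendsto' ((A.reApplyInnerSelf_continuous.tendsto _).comp hmul)
    fun n ↦ (hu_forall n).2.2

end Multiplication

section FunctionalCalculus

open Metric Polynomial

lemma exists_polynomial_dist_lt {f : ℂ → ℂ} {r R : ℝ} (hf : DifferentiableOn ℂ f (ball 0 R))
    (hr : 0 ≤ r) (hrR : r < R) {ε : ℝ} (hε : 0 < ε) :
    ∃ p : ℂ[X], ∀ z, ‖z‖ ≤ r → dist (f z) (p.eval z) < ε := by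
  obtain ⟨r', hrr', hr'R⟩ := exists_between hrR
  obtain ⟨R', hr'R', hR'R⟩ := exists_between hr'R
  lift r' to ℝ≥0 using hr.trans hrr'.le
  lift R' to ℝ≥0 using r'.2.trans hr'R'.le
  have hseries := (hf.mono (closedBall_subset_ball hR'R)).hasFPowerSeriesOnBall
    (r'.2.trans_lt hr'R')
  obtain ⟨n, hn⟩ := (tendstoUniformlyOn_iff.1
    (hseries.tendstoUniformlyOn (r' := r') (by exact_mod_cast hr'R')) ε hε).exists
  refine ⟨∑ k ∈ Finset.range n, monomial k ((cauchyPowerSeries f 0 R').coeff k), fun z hz ↦ ?_⟩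
  have hdist := hn z (mem_ball_zero_iff.2 (hz.trans_lt hrr'))
  rw [zero_add] at hdist
  convert hdist using 2
  simp [FormalMultilinearSeries.partialSum, eval_finsetSum, mul_comm]

lemma exists_polynomial_norm_le_one_and_dist_lt {f : ℂ → ℂ} {r R : ℝ}
    (hf : DifferentiableOn ℂ f (ball 0 R)) (hr : 0 ≤ r) (hrR : r < R)
    (hf_le : ∀ z, ‖z‖ ≤ r → ‖f z‖ ≤ 1) {ε : ℝ} (hε : 0 < ε) :
    ∃ p : ℂ[X], ∀ z, ‖z‖ ≤ r → ‖p.eval z‖ ≤ 1 ∧ dist (f z) (p.eval z) < ε := by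
  set δ := ε / 2 with hδ
  have hδ_pos : 0 < δ := half_pos hε
  obtain ⟨q, hq⟩ := exists_polynomial_dist_lt hf hr hrR hδ_pos
  have hscale : ‖((1 + δ : ℝ) : ℂ)⁻¹‖ = (1 + δ)⁻¹ := by
    rw [norm_inv, norm_real, Real.norm_of_nonneg (by positivity)]
  refine ⟨Polynomial.C ((1 + δ : ℝ) : ℂ)⁻¹ * q, fun z hz ↦ ?_⟩
  have hfq := hq z hz
  set p' := ((1 + δ : ℝ) : ℂ)⁻¹ * q.eval z with hp'
  have hq_eq : q.eval z = (1 + δ : ℝ) * p' := by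
    rw [hp', mul_inv_cancel_left₀ (ofReal_ne_zero.2 (by positivity))]
  have hq_le : ‖q.eval z‖ ≤ 1 + δ := by
    rw [dist_comm, dist_eq_norm] at hfq
    linarith [norm_le_norm_add_norm_sub' (q.eval z) (f z), hf_le z hz]
  have hp'_le : ‖p'‖ ≤ 1 := by
    rw [hp', norm_mul, hscale]
    exact inv_mul_le_one_of_le₀ hq_le (by positivity)
  have hqp' : dist (q.eval z) p' ≤ δ := by
    rw [dist_eq_norm, hq_eq, show ((1 + δ : ℝ) : ℂ) * p' - p' = (δ : ℂ) * p' by push_cast; ring,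
      norm_mul, norm_real, Real.norm_of_nonneg hδ_pos.le]
    exact mul_le_of_le_one_right hδ_pos.le hp'_le
  rw [eval_mul, eval_C]
  exact ⟨hp'_le, by linarith [dist_triangle (f z) (q.eval z) p']⟩

variable {μ : Measure ℝ} {A : Lp ℂ 2 μ →L[ℂ] Lp ℂ 2 μ}

lemma reApplyInnerSelf_mulLp_comp_le (hA : ∀ φ, 0 ≤ A.reApplyInnerSelf φ) {w : ℝ → ℂ}
    (hw : AEStronglyMeasurable w μ) (hw_norm : ∀ x, ‖w x‖ ≤ 1)
    (hAw : ∀ φ, A.reApplyInnerSelf (mulLp w φ) ≤ A.reApplyInnerSelf φ)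
    {f : ℂ → ℂ} {R : ℝ} (hR : 1 < R) (hf : DifferentiableOn ℂ f (ball 0 R))
    (hf_le : ∀ z, ‖z‖ ≤ 1 → ‖f z‖ ≤ 1) (φ : Lp ℂ 2 μ) :
    A.reApplyInnerSelf (mulLp (fun x ↦ f (w x)) φ) ≤ A.reApplyInnerSelf φ := by
  have hw_mem : MemLp w ∞ μ := memLp_top_of_bound hw 1 (.of_forall hw_norm)
  simp_rw [mulLp_eq_mulLpL hw_mem] at hAw
  choose! p hp using fun ε (hε : (0 : ℝ) < ε) ↦
    exists_polynomial_norm_le_one_and_dist_lt hf zero_le_one hR hf_le hε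
  refine reApplyInnerSelf_mulLp_le_of_tendsto (l := nhdsWithin (0 : ℝ) (Ioi 0)) (c := 1)
    (G := fun ε x ↦ (p ε).eval (w x)) (.of_forall fun ε ↦ ?_) ?_ (.of_forall fun x ↦ ?_) ?_
  · exact (p ε).continuous.comp_aestronglyMeasurable hw
  · filter_upwards [self_mem_nhdsWithin] with ε hε
    exact .of_forall fun x ↦ (hp ε hε (w x) (hw_norm x)).1
  · refine tendsto_iff_dist_tendsto_zero.2 (squeeze_zero' (.of_forall fun _ ↦ dist_nonneg) ?_
      (tendsto_id.mono_left nhdsWithin_le_nhds))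
    filter_upwards [self_mem_nhdsWithin] with ε hε
    rw [dist_comm]
    exact (hp ε hε (w x) (hw_norm x)).2.le
  · filter_upwards [self_mem_nhdsWithin] with ε hε
    rw [mulLp_eval_eq_aeval_mulLpL hw_mem]
    exact reApplyInnerSelf_aeval_le hA hAw (fun z hz ↦ (hp ε hε z hz.le).1) φ

end FunctionalCalculus

section HalfPlane

/-- The map of the unit disc to the upper half-plane which, written in terms of `z = exp (i h k)`,
is `k ↦ (2 / h) tan (h k / 2)`. It replaces `k` by a function of translations by `h`, and recovers
`k` in the limit `h → 0`. -/
def discToHalfPlane (h : ℝ) (z : ℂ) : ℂ :=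
  (2 / h : ℝ) * (I * ((1 - z) / (1 + z)))

lemma one_add_ne_zero_of_norm_lt_one {z : ℂ} (hz : ‖z‖ < 1) : 1 + z ≠ 0 := by
  intro h
  rw [eq_neg_of_add_eq_zero_right h, norm_neg, norm_one] at hz
  exact lt_irrefl _ hz

lemma discToHalfPlane_im_pos {h : ℝ} (hh : 0 < h) {z : ℂ} (hz : ‖z‖ < 1) :
    0 < (discToHalfPlane h z).im := by
  have him : (discToHalfPlane h z).im = 2 / h * ((1 - ‖z‖ ^ 2) / normSq (1 + z)) := by
    rw [discToHalfPlane, im_ofReal_mul, I_mul_im, div_re, ← normSq_eq_norm_sq, normSq_apply z]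
    simp only [sub_re, add_re, one_re, sub_im, add_im, one_im]
    ring
  have hnum : 0 < 1 - ‖z‖ ^ 2 := by nlinarith [norm_nonneg z]
  have hden : 0 < normSq (1 + z) := normSq_pos.2 (one_add_ne_zero_of_norm_lt_one hz)
  rw [him]
  positivity

lemma differentiableOn_comp_discToHalfPlane {F : ℂ → ℂ}
    (hF : DifferentiableOn ℂ F {ω | 0 < ω.im}) {h : ℝ} (hh : 0 < h) :
    DifferentiableOn ℂ (fun z ↦ F (discToHalfPlane h z)) (Metric.ball 0 1) := by
  refine hF.comp (fun z hz ↦ ?_) fun z hz ↦ discToHalfPlane_im_pos hh (mem_ball_zero_iff.1 hz)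
  have := one_add_ne_zero_of_norm_lt_one (mem_ball_zero_iff.1 hz)
  unfold discToHalfPlane
  fun_prop (disch := assumption)

lemma tendsto_discToHalfPlane_exp (ω : ℂ) :
    Tendsto (fun h : ℝ ↦ discToHalfPlane h (exp (I * h * ω))) (nhdsWithin 0 (Ioi 0)) (nhds ω) := by
  have hderiv : HasDerivAt (fun h : ℝ ↦ exp (I * h * ω)) (I * ω) 0 := by
    simpa using (((hasDerivAt_id (0 : ℝ)).ofReal_comp.const_mul I).mul_const ω).cexp
  have hslope : Tendsto (fun h : ℝ ↦ h⁻¹ • (exp (I * h * ω) - 1)) (nhdsWithin 0 (Ioi 0))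
      (nhds (I * ω)) := by
    simpa using hderiv.tendsto_slope_zero_right
  have hexp : Tendsto (fun h : ℝ ↦ 1 + exp (I * h * ω)) (nhdsWithin 0 (Ioi 0)) (nhds (1 + 1)) := by
    simpa using (hderiv.continuousAt.tendsto.mono_left nhdsWithin_le_nhds).const_add 1
  convert (hslope.const_mul (-2 * I)).div hexp (by norm_num) using 1
  · ext h
    simp only [discToHalfPlane, real_smul, Pi.div_apply]
    push_cast
    ring
  · congr 1
    linear_combination ω * I_sq

lemma norm_exp_I_mul_mul (h k : ℝ) : ‖exp (I * h * k)‖ = 1 := by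
  rw [mul_assoc, mul_comm, ← ofReal_mul, norm_exp_ofReal_mul_I]

variable {μ : Measure ℝ} {A : Lp ℂ 2 μ →L[ℂ] Lp ℂ 2 μ} {F : ℂ → ℂ}

lemma reApplyInnerSelf_mulLp_comp_discToHalfPlane_le (hA : ∀ φ, 0 ≤ A.reApplyInnerSelf φ)
    {w : ℝ → ℂ} (hw : AEStronglyMeasurable w μ) (hw_norm : ∀ x, ‖w x‖ ≤ 1)
    (hAw : ∀ φ, A.reApplyInnerSelf (mulLp w φ) ≤ A.reApplyInnerSelf φ)
    (hF : DifferentiableOn ℂ F {ω | 0 < ω.im}) (hF_le : ∀ ω, 0 < ω.im → ‖F ω‖ ≤ 1)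
    {h r : ℝ} (hh : 0 < h) (hr : 0 < r) (hr_lt : r < 1) (φ : Lp ℂ 2 μ) :
    A.reApplyInnerSelf (mulLp (fun x ↦ F (discToHalfPlane h (r * w x))) φ) ≤
      A.reApplyInnerSelf φ := by
  have norm_damped_lt {z : ℂ} (hz : ‖z‖ < r⁻¹) : ‖(r : ℂ) * z‖ < 1 := by
    rwa [norm_mul, norm_real, Real.norm_of_nonneg hr.le, ← lt_inv_mul_iff₀ hr, mul_one]
  have hr_inv : 1 < r⁻¹ := (one_lt_inv₀ hr).2 hr_lt
  refine reApplyInnerSelf_mulLp_comp_le hA hw hw_norm hAw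
    (f := fun z ↦ F (discToHalfPlane h (r * z))) hr_inv ?_ (fun z hz ↦ ?_) φ
  · exact (differentiableOn_comp_discToHalfPlane hF hh).comp (by fun_prop)
      fun z hz ↦ mem_ball_zero_iff.2 (norm_damped_lt (mem_ball_zero_iff.1 hz))
  · exact hF_le _ (discToHalfPlane_im_pos hh (norm_damped_lt (hz.trans_lt hr_inv)))

lemma reApplyInnerSelf_mulLp_add_mul_I_le (hA : ∀ φ, 0 ≤ A.reApplyInnerSelf φ)
    (hA_exp : ∀ h : ℝ, 0 < h → ∀ φ,
      A.reApplyInnerSelf (mulLp (fun k : ℝ ↦ exp (I * h * k)) φ) ≤ A.reApplyInnerSelf φ)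
    (hF : DifferentiableOn ℂ F {ω | 0 < ω.im}) (hF_le : ∀ ω, 0 < ω.im → ‖F ω‖ ≤ 1)
    {b : ℝ} (hb : 0 < b) (φ : Lp ℂ 2 μ) :
    A.reApplyInnerSelf (mulLp (fun k : ℝ ↦ F (k + b * I)) φ) ≤ A.reApplyInnerSelf φ := by
  have exp_split (h k : ℝ) :
      exp (I * h * (k + b * I)) = (Real.exp (-(h * b)) : ℝ) * exp (I * h * k) := by
    rw [ofReal_exp, ← exp_add]
    congr 1
    push_cast
    linear_combination h * b * I_sq
  have exp_lt_one {h : ℝ} (hh : 0 < h) : Real.exp (-(h * b)) < 1 :=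
    Real.exp_lt_one_iff.2 (neg_neg_of_pos (mul_pos hh hb))
  have norm_exp_lt_one {h : ℝ} (hh : 0 < h) (k : ℝ) : ‖exp (I * h * (k + b * I))‖ < 1 := by
    rw [exp_split, norm_mul, norm_exp_I_mul_mul, mul_one, norm_real, Real.norm_of_nonneg
      (Real.exp_pos _).le]
    exact exp_lt_one hh
  refine reApplyInnerSelf_mulLp_le_of_tendsto (l := nhdsWithin (0 : ℝ) (Ioi 0)) (c := 1)
    (G := fun h k ↦ F (discToHalfPlane h (exp (I * h * (k + b * I))))) ?_ ?_
    (.of_forall fun k ↦ ?_) ?_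
  · filter_upwards [self_mem_nhdsWithin] with h hh
    exact ((differentiableOn_comp_discToHalfPlane hF hh).continuousOn.comp_continuous
      (by fun_prop) fun k ↦ mem_ball_zero_iff.2 (norm_exp_lt_one hh k)).aestronglyMeasurable
  · filter_upwards [self_mem_nhdsWithin] with h hh
    exact .of_forall fun k ↦ hF_le _ (discToHalfPlane_im_pos hh (norm_exp_lt_one hh k))
  · have hω : {ω : ℂ | 0 < ω.im} ∈ nhds (k + b * I) :=
      (isOpen_lt continuous_const continuous_im).mem_nhds (by simpa using hb)
    exact (hF.differentiableAt hω).continuousAt.tendsto.comp (tendsto_discToHalfPlane_exp _)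
  · filter_upwards [self_mem_nhdsWithin] with h hh
    simp_rw [exp_split]
    exact reApplyInnerSelf_mulLp_comp_discToHalfPlane_le hA
      (Continuous.aestronglyMeasurable (by fun_prop)) (fun k ↦ (norm_exp_I_mul_mul h k).le)
      (hA_exp h hh) hF hF_le hh (Real.exp_pos _) (exp_lt_one hh) φ

end HalfPlane

section HardyExt

lemma HardyExt.reApplyInnerSelf_mulLp_le {T : ℝ → ℂ} {Tt : ℂ → ℂ} (hT : HardyExt T Tt)
    {A : H2 →L[ℂ] H2} (hA : ∀ φ, 0 ≤ A.reApplyInnerSelf φ)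
    (hA_exp : ∀ h : ℝ, 0 < h → ∀ φ,
      A.reApplyInnerSelf (mulLp (fun k : ℝ ↦ exp (I * h * k)) φ) ≤ A.reApplyInnerSelf φ)
    (φ : H2) : A.reApplyInnerSelf (mulLp T φ) ≤ A.reApplyInnerSelf φ := by
  refine reApplyInnerSelf_mulLp_le_of_tendsto (l := nhdsWithin (0 : ℝ) (Ioi 0)) (c := 1)
    (G := fun b k ↦ Tt (k + b * I)) ?_ ?_ hT.boundary ?_
  all_goals filter_upwards [self_mem_nhdsWithin] with b (hb : 0 < b)
  · exact (hT.analytic.continuousOn.comp_continuous (by fun_prop)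
      fun k ↦ by simpa using hb).aestronglyMeasurable
  · exact .of_forall fun k ↦ hT.bounded _ (by simpa using hb.le)
  · exact reApplyInnerSelf_mulLp_add_mul_I_le hA hA_exp hT.analytic
      (fun ω hω ↦ hT.bounded ω hω.le) hb φ

end HardyExt

section Translation

lemma transLp_eq_compMeasurePreservingₗᵢ (t : ℝ) (φ : H2) :
    transLp t φ =
      Lp.compMeasurePreservingₗᵢ ℂ (· - t) (measurePreserving_sub_right volume t) φ := by
  have h : MemLp (fun x : ℝ ↦ φ (x - t)) 2 volume :=
    (Lp.memLp φ).comp_measurePreserving (measurePreserving_sub_right volume t)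
  rw [transLp, dif_pos h]
  exact Lp.ext (h.coeFn_toLp.trans
    (Lp.coeFn_compMeasurePreserving φ (measurePreserving_sub_right volume t)).symm)

lemma coeFn_transLp (t : ℝ) (φ : H2) : transLp t φ =ᵐ[volume] fun x ↦ φ (x - t) := by
  rw [transLp_eq_compMeasurePreservingₗᵢ]
  exact Lp.coeFn_compMeasurePreserving φ (measurePreserving_sub_right volume t)

lemma continuous_transLp (t : ℝ) : Continuous (transLp t) := by
  simp_rw [funext (transLp_eq_compMeasurePreservingₗᵢ t)]
  exact LinearIsometry.continuous _

lemma transLp_transLp_neg (t : ℝ) (φ : H2) : transLp t (transLp (-t) φ) = φ := by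
  refine Lp.ext ((coeFn_transLp t _).trans ?_)
  filter_upwards [(measurePreserving_sub_right volume t).quasiMeasurePreserving.ae
    (coeFn_transLp (-t) φ)] with x hx
  rw [hx, sub_neg_eq_add, sub_add_cancel]

lemma inner_transLp_neg_right (t : ℝ) (φ ψ : H2) :
    inner ℂ φ (transLp (-t) ψ) = inner ℂ (transLp t φ) ψ := by
  conv_rhs => rw [← transLp_transLp_neg t ψ]
  simp_rw [transLp_eq_compMeasurePreservingₗᵢ t, LinearIsometry.inner_map_map]

lemma memLp_top_exp_I_mul_mul {μ : Measure ℝ} (t : ℝ) :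
    MemLp (fun k : ℝ ↦ exp (I * t * k)) ∞ μ :=
  memLp_top_of_bound (Continuous.aestronglyMeasurable (by fun_prop)) 1
    (.of_forall fun k ↦ (norm_exp_I_mul_mul t k).le)

lemma IsFourier.apply_transLp_neg_of_integrable {𝓕 : H2 ≃ₗᵢ[ℂ] H2} (h𝓕 : IsFourier 𝓕) (t : ℝ)
    {φ : H2} (hφ : Integrable φ) :
    𝓕 (transLp (-t) φ) = mulLp (fun k : ℝ ↦ exp (I * t * k)) (𝓕 φ) := by
  have htrans : Integrable (transLp (-t) φ) :=
    (hφ.comp_sub_right (-t)).congr (coeFn_transLp (-t) φ).symm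
  have integral_transLp (y : ℝ) : ∫ x : ℝ, exp (-(I * y * x)) * transLp (-t) φ x =
      exp (I * t * y) * ∫ x : ℝ, exp (-(I * y * x)) * φ x := by
    rw [← integral_const_mul, ← integral_add_right_eq_self
      (fun x : ℝ ↦ exp (I * t * y) * (exp (-(I * y * x)) * φ x)) t]
    refine integral_congr_ae ?_
    filter_upwards [coeFn_transLp (-t) φ] with x hx
    rw [hx, ← mul_assoc, ← exp_add, sub_neg_eq_add]
    congr 2
    push_cast
    ring
  refine (mulLp_eq_of_ae_eq ?_).symm
  filter_upwards [h𝓕.1 φ hφ, h𝓕.1 _ htrans] with y hy htrans_y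
  rw [htrans_y, hy, integral_transLp, mul_left_comm]

lemma IsFourier.apply_transLp_neg {𝓕 : H2 ≃ₗᵢ[ℂ] H2} (h𝓕 : IsFourier 𝓕) (t : ℝ) (φ : H2) :
    𝓕 (transLp (-t) φ) = mulLp (fun k : ℝ ↦ exp (I * t * k)) (𝓕 φ) := by
  have hdense : DenseRange ((↑) : Lp.simpleFunc ℂ 2 (volume : Measure ℝ) → H2) :=
    Lp.simpleFunc.denseRange ENNReal.ofNat_ne_top
  refine hdense.induction_on φ ?_ fun s ↦ h𝓕.apply_transLp_neg_of_integrable t ?_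
  · simp_rw [mulLp_eq_mulLpL (memLp_top_exp_I_mul_mul t)]
    exact isClosed_eq (𝓕.continuous.comp (continuous_transLp _))
      ((mulLpL _ _).continuous.comp 𝓕.continuous)
  · exact ((SimpleFunc.memLp_iff_integrable two_ne_zero ENNReal.ofNat_ne_top).1
      (Lp.simpleFunc.memLp s)).congr (Lp.simpleFunc.toSimpleFunc_eq_toFun s)

end Translation

section PositiveOperatorMeasure

variable {K : Type} [NormedAddCommGroup K] [InnerProductSpace ℂ K] [CompleteSpace K]

open Classical in
/-- The vector measure `B ↦ E(B) φ`. The POM `E` is unconstrained on non-measurable sets, whereas a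
`VectorMeasure` has to vanish there. -/
def POM.vectorMeasure (E : POM K) (φ : K) : VectorMeasure ℝ K where
  measureOf' B := if MeasurableSet B then E.toFun B φ else 0
  empty' := by simp [E.empty]
  not_measurable' B hB := if_neg hB
  m_iUnion' f hf hdisj := by
    simpa [hf, MeasurableSet.iUnion hf] using E.sigma_additive f hf hdisj φ

lemma POM.vectorMeasure_apply (E : POM K) (φ : K) {B : Set ℝ} (hB : MeasurableSet B) :
    E.vectorMeasure φ B = E.toFun B φ :=
  if_pos hB

lemma POM.toFun_mono (E : POM K) {B C : Set ℝ} (hB : MeasurableSet B) (hC : MeasurableSet C)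
    (hBC : B ⊆ C) : E.toFun B ≤ E.toFun C := by
  have hsdiff : E.toFun C - E.toFun B = E.toFun (C \ B) := by
    ext φ
    rw [sub_apply, ← E.vectorMeasure_apply φ hB, ← E.vectorMeasure_apply φ hC,
      ← E.vectorMeasure_apply φ (hC.diff hB), VectorMeasure.of_sdiff hB hC hBC]
  rw [ContinuousLinearMap.le_def, hsdiff]
  exact E.pos _

lemma POM.reApplyInnerSelf_transLp_neg_le (E : POM H2)
    (hcov : ∀ (t : ℝ) (B : Set ℝ), MeasurableSet B → ∀ φ : H2,
      transLp t (E.toFun B (transLp (-t) φ)) = E.toFun ((· + t) '' B) φ)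
    (a : ℝ) {t : ℝ} (ht : 0 ≤ t) (φ : H2) :
    (E.toFun (Ici a)).reApplyInnerSelf (transLp (-t) φ) ≤ (E.toFun (Ici a)).reApplyInnerSelf φ := by
  have hmono : E.toFun (Ici (a + t)) ≤ E.toFun (Ici a) :=
    E.toFun_mono measurableSet_Ici measurableSet_Ici (Ici_subset_Ici.2 (by linarith))
  have hdiff := ((ContinuousLinearMap.le_def _ _).1 hmono).re_inner_nonneg_left φ
  rw [ContinuousLinearMap.reApplyInnerSelf_apply, inner_transLp_neg_right,
    hcov t _ measurableSet_Ici, image_add_const_Ici]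
  rw [sub_apply, inner_sub_left, map_sub] at hdiff
  exact sub_nonneg.1 hdiff

end PositiveOperatorMeasure

theorem statement8_general (𝓕 : H2 ≃ₗᵢ[ℂ] H2) (h𝓕 : IsFourier 𝓕) (E : POM H2)
    (hcov : ∀ (t : ℝ) (B : Set ℝ), MeasurableSet B → ∀ φ : H2,
      transLp t (E.toFun B (transLp (-t) φ)) = E.toFun ((· + t) '' B) φ)
    (T : ℝ → ℂ) (Tt : ℂ → ℂ) (hTt : HardyExt T Tt) (a : ℝ) (φ : H2) :
    (inner ℂ (𝓕.symm (mulLp T (𝓕 φ)))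
        (E.toFun (Set.Ici a) (𝓕.symm (mulLp T (𝓕 φ)))) : ℂ).re ≤
      (inner ℂ φ (E.toFun (Set.Ici a) φ) : ℂ).re := by
  let U : H2 →L[ℂ] H2 := 𝓕.symm.toContinuousLinearEquiv
  let A : H2 →L[ℂ] H2 := U.adjoint ∘L E.toFun (Ici a) ∘L U
  have hA (ψ : H2) : A.reApplyInnerSelf ψ = (E.toFun (Ici a)).reApplyInnerSelf (𝓕.symm ψ) :=
    reApplyInnerSelf_adjoint_conj _ U ψ
  have hA_exp (t : ℝ) (ht : 0 < t) (ψ : H2) :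
      A.reApplyInnerSelf (mulLp (fun k : ℝ ↦ exp (I * t * k)) ψ) ≤ A.reApplyInnerSelf ψ := by
    rw [← 𝓕.apply_symm_apply ψ, ← h𝓕.apply_transLp_neg, hA, hA, 𝓕.symm_apply_apply,
      𝓕.symm_apply_apply]
    exact E.reApplyInnerSelf_transLp_neg_le hcov a ht.le _
  have hA_mulLp := hTt.reApplyInnerSelf_mulLp_le ((E.pos (Ici a)).adjoint_conj U).2 hA_exp (𝓕 φ)
  rw [hA, hA, 𝓕.symm_apply_apply] at hA_mulLp
  rw [← inner_conj_symm φ, ← inner_conj_symm (𝓕.symm _), conj_re, conj_re]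
  exact hA_mulLp

/-- Let `E` be a localization observable on `L²(ℝ)`: a POM which is
translation covariant, `e^{-itP} E(B) e^{itP} = E(B+t)`, and boost invariant,
`e^{itQ} E(B) e^{-itQ} = E(B)`. If `T : ℝ → ℂ` is measurable with a bounded analytic
extension to the upper half-plane with boundary values `T` a.e., then
`T(P)* E([a,∞)) T(P) ≤ E([a,∞))` for every `a ∈ ℝ`, where `T(P) = F* T(M) F`. -/
theorem statement8 (𝓕 : H2 ≃ₗᵢ[ℂ] H2) (h𝓕 : IsFourier 𝓕) (E : POM H2)
    (hcov : ∀ (t : ℝ) (B : Set ℝ), MeasurableSet B → ∀ φ : H2,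
      transLp t (E.toFun B (transLp (-t) φ)) = E.toFun ((· + t) '' B) φ)
    (hboost : ∀ (t : ℝ) (B : Set ℝ), MeasurableSet B → ∀ φ : H2,
      mulLp (fun x : ℝ => Complex.exp (Complex.I * t * x))
        (E.toFun B (mulLp (fun x : ℝ => Complex.exp (-(Complex.I * t * x))) φ)) =
      E.toFun B φ)
    (T : ℝ → ℂ) (hT : Measurable T) (Tt : ℂ → ℂ) (hTt : HardyExt T Tt)
    (a : ℝ) (φ : H2) :
    (inner ℂ (𝓕.symm (mulLp T (𝓕 φ)))
        (E.toFun (Set.Ici a) (𝓕.symm (mulLp T (𝓕 φ)))) : ℂ).re ≤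
      (inner ℂ φ (E.toFun (Set.Ici a) φ) : ℂ).re :=
  statement8_general 𝓕 h𝓕 E hcov T Tt hTt a φ
end
end

section
/- Let φ ∈ L²(ℝ) satisfy (Fφ)(k) = 0 for almost all k > 0, and let a ∈ ℝ. For t ∈ ℝ define φ_t := F*(k ↦ e^{-itk²}(Fφ)(k)). Then lim_{t→+∞} ∫_{[a,∞)} |φ_t(x)|² dx = 0; that is, s-lim_{t→∞} E^Q([a,∞)) e^{-itH₀} P̌₋ = 0, where E^Q([a,∞)) is multiplication by the characteristic function of [a,∞) and P̌₋ is the projection onto states with Fourier transform supported in (−∞,0]. -/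
open MeasureTheory Complex Filter Set
open scoped ENNReal NNReal

noncomputable section

/-!
Smooth functions supported in a compact subset of `(-∞, 0)` are dense among the `L²` functions
vanishing on `(0, ∞)`, and `f ↦ (𝓕* e^{-itk²} f)|_[a,∞)` is a contraction for every `t`. So it
suffices to treat a momentum amplitude `g` supported in `(-∞, -δ]`. There the phase `xk - tk²` has
derivative `x - 2tk ≥ x + 2tδ`, and one integration by parts bounds the evolved state at `x ≥ a` by
`C / (x + 2tδ)` with `C` independent of `t`. The square of this bound integrates over `[a, ∞)` to
`C² / (a + 2tδ) → 0`.
-/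

section Multiplication

lemma memLp_mul_of_norm_eq_one {α : Type*} [MeasurableSpace α] {μ : Measure α} {p : ℝ≥0∞}
    {e : α → ℂ} (he : AEStronglyMeasurable e μ) (hnorm : ∀ x, ‖e x‖ = 1) (f : Lp ℂ p μ) :
    MemLp (fun x => e x * f x) p μ :=
  (Lp.memLp f).congr_norm (he.mul (Lp.aestronglyMeasurable f)) <|
    .of_forall fun x => by simp [hnorm]

variable {μ : Measure ℝ} {e : ℝ → ℂ}

lemma coeFn_mulLp_s11 (he : AEStronglyMeasurable e μ) (hnorm : ∀ x, ‖e x‖ = 1) (f : Lp ℂ 2 μ) :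
    mulLp e f =ᵐ[μ] fun x => e x * f x := by
  rw [mulLp, dif_pos (memLp_mul_of_norm_eq_one he hnorm f)]
  exact MemLp.coeFn_toLp _

/-- Multiplication by a unimodular function, as a linear isometry of `L²`. -/
def mulLpIsometry (he : AEStronglyMeasurable e μ) (hnorm : ∀ x, ‖e x‖ = 1) :
    Lp ℂ 2 μ →ₗᵢ[ℂ] Lp ℂ 2 μ where
  toFun := mulLp e
  map_add' f g := by
    apply Lp.ext
    filter_upwards [coeFn_mulLp_s11 he hnorm f, coeFn_mulLp_s11 he hnorm g, coeFn_mulLp_s11 he hnorm (f + g),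
      Lp.coeFn_add f g, Lp.coeFn_add (mulLp e f) (mulLp e g)] with x hf hg hfg hadd hadd'
    simp only [hf, hg, hfg, hadd, hadd', Pi.add_apply, mul_add]
  map_smul' c f := by
    apply Lp.ext
    filter_upwards [coeFn_mulLp_s11 he hnorm f, coeFn_mulLp_s11 he hnorm (c • f), Lp.coeFn_smul c f,
      Lp.coeFn_smul c (mulLp e f)] with x hf hcf hsmul hsmul'
    simp only [hf, hcf, hsmul, hsmul', Pi.smul_apply, RingHom.id_apply, mul_smul_comm]
  norm_map' f := by
    rw [Lp.norm_def, Lp.norm_def]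
    refine congrArg ENNReal.toReal (eLpNorm_congr_norm_ae ?_)
    filter_upwards [coeFn_mulLp_s11 he hnorm f] with x hf
    simp [hf, hnorm]

end Multiplication

section StrongLimit

variable {𝕜 E F ι : Type*} [NontriviallyNormedField 𝕜] [NormedAddCommGroup E] [NormedSpace 𝕜 E]
  [NormedAddCommGroup F] [NormedSpace 𝕜 F]

/-- The subspace of vectors on which the operators `T i` converge strongly to `0` along `l`. -/
def strongNullSpace (T : ι → E →L[𝕜] F) (l : Filter ι) : Submodule 𝕜 E where
  carrier := {x | Tendsto (T · x) l (nhds 0)}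
  add_mem' hx hy := by simpa using hx.add hy
  zero_mem' := by simp [tendsto_const_nhds]
  smul_mem' c _ hx := by simpa using hx.const_smul c

lemma isClosed_strongNullSpace {T : ι → E →L[𝕜] F} {C : ℝ≥0} (hT : ∀ i, ‖T i‖₊ ≤ C)
    (l : Filter ι) : IsClosed (strongNullSpace T l : Set E) :=
  (LipschitzWith.uniformEquicontinuous (fun i => ⇑(T i)) C fun i =>
    (T i).lipschitz.weaken (hT i)).equicontinuous.isClosed_setOfPred_tendsto continuous_const

end StrongLimit

section L2

lemma norm_sq_eq_integral_norm_sq {α E : Type*} [MeasurableSpace α] {μ : Measure α}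
    [NormedAddCommGroup E] (f : Lp E 2 μ) : ‖f‖ ^ 2 = ∫ x, ‖f x‖ ^ 2 ∂μ := by
  rw [Lp.norm_def, (Lp.memLp f).eLpNorm_eq_integral_rpow_norm two_ne_zero ENNReal.ofNat_ne_top,
    ENNReal.toReal_ofReal (by positivity), ← Real.rpow_natCast, ← Real.rpow_mul (by positivity)]
  simp

lemma mem_of_contDiff_mem_of_ae_eq_zero {𝕜 E : Type*} [RCLike 𝕜] [NormedAddCommGroup E]
    [NormedSpace ℝ E] [FiniteDimensional ℝ E] [MeasurableSpace E] [BorelSpace E] {μ : Measure E}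
    [IsLocallyFiniteMeasure μ] {K : Submodule 𝕜 (Lp 𝕜 2 μ)} (hK : IsClosed (K : Set (Lp 𝕜 2 μ)))
    {U : Set E} (hU : IsOpen U)
    (hsmooth : ∀ g : E → ℝ, ContDiff ℝ (⊤ : ℕ∞) g → HasCompactSupport g → tsupport g ⊆ U →
      ∀ f : Lp 𝕜 2 μ, f =ᵐ[μ] (fun x => (g x : 𝕜)) → f ∈ K)
    {f : Lp 𝕜 2 μ} (hf : ∀ᵐ x ∂μ, x ∉ U → f x = 0) : f ∈ K := by
  have : CompleteSpace K := hK.completeSpace_coe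
  rw [← K.orthogonal_orthogonal, Submodule.mem_orthogonal]
  intro v hv
  have v_eq_zero : ∀ᵐ x ∂μ, x ∈ U → v x = 0 := by
    refine hU.ae_eq_zero_of_integral_contDiff_smul_eq_zero
      (((Lp.memLp v).locallyIntegrable one_le_two).locallyIntegrableOn _) fun g hg hgc hgU => ?_
    have hmem : MemLp (fun x => (g x : 𝕜)) 2 μ :=
      (RCLike.continuous_ofReal.comp hg.continuous).memLp_of_hasCompactSupport
        (hgc.comp_left RCLike.ofReal_zero)
    rw [← hv _ (hsmooth g hg hgc hgU _ hmem.coeFn_toLp), L2.inner_def]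
    refine integral_congr_ae ?_
    filter_upwards [hmem.coeFn_toLp] with x hx
    simp [hx, RCLike.real_smul_eq_coe_mul, mul_comm]
  rw [L2.inner_def, integral_eq_zero_of_ae]
  filter_upwards [v_eq_zero, hf] with x hvx hfx
  by_cases hx : x ∈ U
  · simp [hvx hx]
  · simp [hfx hx]

end L2

section NonstationaryPhase

lemma hasDerivAt_cexp_mul_I {ψ : ℝ → ℝ} {k : ℝ} (hψ : DifferentiableAt ℝ ψ k) :
    HasDerivAt (fun k => cexp (ψ k * I)) (cexp (ψ k * I) * (deriv ψ k * I)) k :=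
  (hψ.hasDerivAt.ofReal_comp.mul_const I).cexp

variable {E : Type*} [NormedAddCommGroup E] [NormedSpace ℂ E] {g : ℝ → E} {ψ : ℝ → ℝ}

lemma contDiff_inv_deriv_smul (hg : ContDiff ℝ 1 g) (hψ : ContDiff ℝ 2 ψ)
    (hψ' : ∀ k ∈ tsupport g, deriv ψ k ≠ 0) : ContDiff ℝ 1 fun k => (deriv ψ k)⁻¹ • g k := by
  have hψ'_contDiff : ContDiff ℝ 1 (deriv ψ) := hψ.deriv'
  refine contDiff_iff_contDiffAt.2 fun k => ?_
  by_cases hk : k ∈ tsupport g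
  · exact (hψ'_contDiff.contDiffAt.inv (hψ' k hk)).smul hg.contDiffAt
  · exact contDiffAt_const (c := 0) |>.congr_of_eventuallyEq <|
      notMem_tsupport_iff_eventuallyEq.1 fun hk' => hk (tsupport_smul_subset_right _ _ hk')

lemma norm_deriv_inv_deriv_smul_le (hg : ContDiff ℝ 1 g) (hψ : ContDiff ℝ 2 ψ) {m B : ℝ}
    (hm : 0 < m) (hψ' : ∀ k ∈ tsupport g, m ≤ |deriv ψ k|)
    (hψ'' : ∀ k ∈ tsupport g, |deriv (deriv ψ) k| ≤ B) (k : ℝ) :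
    ‖deriv (fun k => (deriv ψ k)⁻¹ • g k) k‖ ≤ ‖deriv g k‖ / m + B / m ^ 2 * ‖g k‖ := by
  by_cases hk : k ∈ tsupport g
  · have hψ'_ne : deriv ψ k ≠ 0 := abs_pos.1 <| hm.trans_le (hψ' k hk)
    have hψ'_deriv : HasDerivAt (deriv ψ) (deriv (deriv ψ) k) k :=
      (hψ.deriv'.differentiable one_ne_zero k).hasDerivAt
    have hB : 0 ≤ B := (abs_nonneg _).trans (hψ'' k hk)
    have product_rule : deriv (fun k => (deriv ψ k)⁻¹ • g k) k =
        (deriv ψ k)⁻¹ • deriv g k + (-deriv (deriv ψ) k / deriv ψ k ^ 2) • g k :=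
      ((hψ'_deriv.fun_inv hψ'_ne).fun_smul (hg.differentiable one_ne_zero k).hasDerivAt).deriv
    calc ‖deriv (fun k => (deriv ψ k)⁻¹ • g k) k‖
        ≤ ‖deriv g k‖ / |deriv ψ k| + |deriv (deriv ψ) k| / |deriv ψ k| ^ 2 * ‖g k‖ := by
          rw [product_rule]
          exact (norm_add_le _ _).trans_eq (by simp [norm_smul, div_eq_inv_mul])
      _ ≤ ‖deriv g k‖ / m + B / m ^ 2 * ‖g k‖ := by
          gcongr
          exacts [hψ' k hk, hψ'' k hk, hψ' k hk]
  · simp [deriv_of_notMem_tsupport fun hk' => hk (tsupport_smul_subset_right _ _ hk'),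
      image_eq_zero_of_notMem_tsupport hk, deriv_of_notMem_tsupport hk]

lemma integral_cexp_smul_eq (hg : ContDiff ℝ 1 g) (hgc : HasCompactSupport g)
    (hψ : ContDiff ℝ 2 ψ) (hψ' : ∀ k ∈ tsupport g, deriv ψ k ≠ 0) :
    ∫ k, cexp (ψ k * I) • g k =
      I • ∫ k, cexp (ψ k * I) • deriv (fun k => (deriv ψ k)⁻¹ • g k) k := by
  set u : ℝ → E := fun k => (deriv ψ k)⁻¹ • g k with hu
  have hu_contDiff : ContDiff ℝ 1 u := contDiff_inv_deriv_smul hg hψ hψ'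
  have hu_compact : HasCompactSupport u := hgc.smul_left
  have hu_cont := hu_contDiff.continuous
  have hψ_cont := hψ.continuous
  have hψ'_cont : Continuous (deriv ψ) := hψ.continuous_deriv one_le_two
  have hψ_exp_cont : Continuous fun k => cexp (ψ k * I) := by fun_prop
  have by_parts : ∫ k, cexp (ψ k * I) • deriv u k =
      -∫ k, (cexp (ψ k * I) * (deriv ψ k * I)) • u k :=
    integral_bilinear_hasDerivAt_right_eq_neg_left_of_integrable
      (L := ContinuousLinearMap.lsmul ℝ ℂ)
      (fun k _ => hasDerivAt_cexp_mul_I (hψ.differentiable two_ne_zero k))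
      (fun k _ => (hu_contDiff.differentiable one_ne_zero k).hasDerivAt)
      ((hψ_exp_cont.smul (hu_contDiff.continuous_deriv le_rfl)).integrable_of_hasCompactSupport
        hu_compact.deriv.smul_left)
      (Continuous.integrable_of_hasCompactSupport (by fun_prop) hu_compact.smul_left)
      (Continuous.integrable_of_hasCompactSupport (by fun_prop) hu_compact.smul_left)
  have integrand_eq (k : ℝ) :
      (cexp (ψ k * I) * (deriv ψ k * I)) • u k = I • cexp (ψ k * I) • g k := by
    by_cases hk : k ∈ tsupport g
    · have := ofReal_ne_zero.2 (hψ' k hk)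
      simp only [hu, ← coe_smul, smul_smul]
      congr 1
      push_cast
      field_simp
    · simp [hu, image_eq_zero_of_notMem_tsupport hk]
  simp_rw [by_parts, integrand_eq, integral_smul, smul_neg, smul_smul, I_mul_I, neg_smul, one_smul,
    neg_neg]

lemma norm_integral_cexp_smul_le (hg : ContDiff ℝ 1 g) (hgc : HasCompactSupport g)
    (hψ : ContDiff ℝ 2 ψ) {m B : ℝ} (hm : 0 < m) (hψ' : ∀ k ∈ tsupport g, m ≤ |deriv ψ k|)
    (hψ'' : ∀ k ∈ tsupport g, |deriv (deriv ψ) k| ≤ B) :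
    ‖∫ k, cexp (ψ k * I) • g k‖ ≤ (∫ k, ‖deriv g k‖) / m + B / m ^ 2 * ∫ k, ‖g k‖ := by
  have hg_int : Integrable fun k => ‖g k‖ :=
    (hg.continuous.integrable_of_hasCompactSupport hgc).norm
  have hg'_int : Integrable fun k => ‖deriv g k‖ :=
    ((hg.continuous_deriv le_rfl).integrable_of_hasCompactSupport hgc.deriv).norm
  rw [integral_cexp_smul_eq hg hgc hψ fun k hk => abs_pos.1 (hm.trans_le (hψ' k hk)), norm_smul,
    norm_I, one_mul, ← integral_div, ← integral_const_mul,
    ← integral_add (hg'_int.div_const m) (hg_int.const_mul _)]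
  refine norm_integral_le_of_norm_le ((hg'_int.div_const m).add (hg_int.const_mul _)) <|
    .of_forall fun k => ?_
  rw [norm_smul, norm_exp_ofReal_mul_I, one_mul]
  exact norm_deriv_inv_deriv_smul_le hg hψ hm hψ' hψ'' k

lemma norm_integral_cexp_quadratic_smul_le (hg : ContDiff ℝ 1 g) (hgc : HasCompactSupport g)
    {δ t x : ℝ} (hgδ : tsupport g ⊆ Iic (-δ)) (hδ : 0 < δ) (ht : 0 < t)
    (hx : -(t * δ) ≤ x) :
    ‖∫ k : ℝ, cexp ((x * k - t * k ^ 2 : ℝ) * I) • g k‖ ≤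
      ((∫ k, ‖deriv g k‖) + 2 / δ * ∫ k, ‖g k‖) / (x + 2 * t * δ) := by
  have deriv_phase : deriv (fun k : ℝ => x * k - t * k ^ 2) = fun k => x - 2 * t * k := by
    ext k
    refine (((hasDerivAt_id k).const_mul x).sub
      ((hasDerivAt_pow 2 k).const_mul t)).deriv.trans ?_
    simp only [mul_one, Nat.cast_ofNat]
    ring
  have deriv_deriv_phase : deriv (fun k : ℝ => x - 2 * t * k) = fun _ => -(2 * t) := by
    ext k
    simp
  have htδ : 0 < t * δ := mul_pos ht hδ
  have hm : t * δ ≤ x + 2 * t * δ := by linarith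
  have hm_pos : 0 < x + 2 * t * δ := htδ.trans_le hm
  calc ‖∫ k : ℝ, cexp ((x * k - t * k ^ 2 : ℝ) * I) • g k‖
      ≤ (∫ k, ‖deriv g k‖) / (x + 2 * t * δ)
          + 2 * t / (x + 2 * t * δ) ^ 2 * ∫ k, ‖g k‖ := by
        refine norm_integral_cexp_smul_le hg hgc (by fun_prop) hm_pos (fun k hk => ?_) fun k _ => ?_
        · have hk_le : t * k ≤ t * -δ := mul_le_mul_of_nonneg_left (hgδ hk) ht.le
          rw [deriv_phase]
          exact le_trans (by linarith) (le_abs_self _)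
        · rw [deriv_phase, deriv_deriv_phase, abs_neg, abs_of_pos (by positivity)]
    _ ≤ (∫ k, ‖deriv g k‖) / (x + 2 * t * δ)
          + 2 * t / ((x + 2 * t * δ) * (t * δ)) * ∫ k, ‖g k‖ := by
        rw [pow_two]
        gcongr
    _ = ((∫ k, ‖deriv g k‖) + 2 / δ * ∫ k, ‖g k‖) / (x + 2 * t * δ) := by
        field_simp

end NonstationaryPhase

section HalfLine

lemma exists_pos_subset_Iic_neg {K : Set ℝ} (hK : IsCompact K) (hK_neg : K ⊆ Iio 0) :
    ∃ δ > 0, K ⊆ Iic (-δ) := by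
  rcases K.eq_empty_or_nonempty with rfl | hne
  · exact ⟨1, one_pos, empty_subset _⟩
  · obtain ⟨d, hd, hd_max⟩ := hK.exists_isGreatest hne
    exact ⟨-d, neg_pos.2 (hK_neg hd), fun k hk => by simpa using hd_max hk⟩

variable {a m : ℝ}

lemma integrableOn_Ioi_inv_add_sq (h : 0 < a + m) :
    IntegrableOn (fun x => ((x + m) ^ 2)⁻¹) (Ioi a) := by
  refine (integrableOn_add_rpow_Ioi_of_lt (a := -2) (by norm_num)
    (neg_lt_iff_pos_add.2 h)).congr_fun (fun x hx => ?_) measurableSet_Ioi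
  have hxm : 0 < x + m := by linarith [mem_Ioi.1 hx]
  simp [Real.rpow_neg hxm.le]

lemma integral_Ioi_inv_add_sq (h : 0 < a + m) : ∫ x in Ioi a, ((x + m) ^ 2)⁻¹ = (a + m)⁻¹ := by
  have primitive (x : ℝ) (hx : x ∈ Ici a) :
      HasDerivAt (fun x => -(x + m)⁻¹) ((x + m) ^ 2)⁻¹ x := by
    have hxm : x + m ≠ 0 := by linarith [mem_Ici.1 hx]
    simpa [neg_div] using (((hasDerivAt_id x).add_const m).fun_inv hxm).fun_neg
  have primitive_tendsto : Tendsto (fun x => -(x + m)⁻¹) atTop (nhds 0) := by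
    simpa using (tendsto_inv_atTop_zero.comp (tendsto_atTop_add_const_right _ m tendsto_id)).neg
  simpa using integral_Ioi_of_hasDerivAt_of_tendsto' primitive (integrableOn_Ioi_inv_add_sq h)
    primitive_tendsto

end HalfLine

section FreeEvolution

/-- The phase factor `e^{-itk²}` of the free evolution in momentum space. -/
def freePhase (t k : ℝ) : ℂ := cexp (-(I * t * k ^ 2))

lemma continuous_freePhase (t : ℝ) : Continuous (freePhase t) := by
  unfold freePhase; fun_prop

lemma norm_freePhase (t k : ℝ) : ‖freePhase t k‖ = 1 := by
  rw [freePhase, ← Complex.norm_exp_ofReal_mul_I (-(t * k ^ 2))]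
  congr 2
  push_cast
  ring

/-- The operator `f ↦ (𝓕* e^{-itk²} f)|_[a,∞)` from momentum space to `L²([a,∞))`. -/
def evolvedTail (𝓕 : H2 ≃ₗᵢ[ℂ] H2) (a t : ℝ) : H2 →L[ℂ] Lp ℂ 2 (volume.restrict (Ici a)) :=
  LpToLpRestrictCLM ℝ ℂ ℂ volume 2 (Ici a) ∘L
    (𝓕.symm.toLinearIsometry.comp
      (mulLpIsometry (continuous_freePhase t).aestronglyMeasurable
        (norm_freePhase t))).toContinuousLinearMap

variable {𝓕 : H2 ≃ₗᵢ[ℂ] H2}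

lemma nnnorm_evolvedTail_le_one (a t : ℝ) : ‖evolvedTail 𝓕 a t‖₊ ≤ 1 :=
  ContinuousLinearMap.opNorm_le_bound _ zero_le_one fun f =>
    (norm_Lp_toLp_restrict_le _ _).trans_eq <|
      (LinearIsometry.norm_map _ f).trans (one_mul ‖f‖).symm

lemma norm_evolvedTail_sq (a t : ℝ) (f : H2) :
    ‖evolvedTail 𝓕 a t f‖ ^ 2 = ∫ x in Ici a, ‖𝓕.symm (mulLp (freePhase t) f) x‖ ^ 2 := by
  rw [norm_sq_eq_integral_norm_sq]
  refine integral_congr_ae ?_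
  filter_upwards [LpToLpRestrictCLM_coeFn ℂ (Ici a) (𝓕.symm (mulLp (freePhase t) f))] with x hx
  exact congrArg (‖·‖ ^ 2) hx

lemma coeFn_symm_mulLp_freePhase (h𝓕 : IsFourier 𝓕) {g : ℝ → ℂ} (hg : Integrable g) {f : H2}
    (hfg : f =ᵐ[volume] g) (t : ℝ) :
    𝓕.symm (mulLp (freePhase t) f) =ᵐ[volume] fun x : ℝ =>
      (Real.sqrt (2 * Real.pi) : ℂ)⁻¹ * ∫ k : ℝ, cexp ((x * k - t * k ^ 2 : ℝ) * I) • g k := by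
  have evolved_eq : mulLp (freePhase t) f =ᵐ[volume] fun k => freePhase t k * g k := by
    filter_upwards [coeFn_mulLp_s11 (continuous_freePhase t).aestronglyMeasurable (norm_freePhase t) f,
      hfg] with k hmul hk
    rw [hmul, hk]
  have evolved_integrable : Integrable (mulLp (freePhase t) f) :=
    (hg.bdd_mul (continuous_freePhase t).aestronglyMeasurable
      (.of_forall fun k => (norm_freePhase t k).le)).congr evolved_eq.symm
  filter_upwards [h𝓕.2 _ evolved_integrable] with x hx
  rw [hx]
  congr 1
  refine integral_congr_ae ?_
  filter_upwards [evolved_eq] with k hk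
  rw [hk, freePhase, ← mul_assoc, ← Complex.exp_add, smul_eq_mul]
  congr 2
  push_cast
  ring

lemma exists_norm_evolvedTail_sq_le (h𝓕 : IsFourier 𝓕) {g : ℝ → ℂ} (hg : ContDiff ℝ 1 g)
    (hgc : HasCompactSupport g) {f : H2} (hfg : f =ᵐ[volume] g) {δ : ℝ}
    (hgδ : tsupport g ⊆ Iic (-δ)) (hδ : 0 < δ) :
    ∃ C, ∀ a t : ℝ, 0 < t → -(t * δ) ≤ a →
      ‖evolvedTail 𝓕 a t f‖ ^ 2 ≤ C * (a + 2 * t * δ)⁻¹ := by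
  refine ⟨(‖(Real.sqrt (2 * Real.pi) : ℂ)⁻¹‖ *
    ((∫ k, ‖deriv g k‖) + 2 / δ * ∫ k, ‖g k‖)) ^ 2, fun a t ht ha => ?_⟩
  have hm_pos : 0 < a + 2 * t * δ := by linarith [mul_pos ht hδ]
  have hg_int : Integrable g := hg.continuous.integrable_of_hasCompactSupport hgc
  rw [norm_evolvedTail_sq, integral_Ici_eq_integral_Ioi, ← integral_Ioi_inv_add_sq hm_pos,
    ← integral_const_mul]
  refine integral_mono_of_nonneg (.of_forall fun x => by positivity)
    ((integrableOn_Ioi_inv_add_sq hm_pos).const_mul _) ?_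
  filter_upwards [ae_restrict_of_ae (coeFn_symm_mulLp_freePhase h𝓕 hg_int hfg t),
    ae_restrict_mem measurableSet_Ioi] with x hx hax
  rw [hx, norm_mul, ← inv_pow, ← mul_pow, mul_assoc, ← div_eq_mul_inv]
  gcongr
  exact norm_integral_cexp_quadratic_smul_le hg hgc hgδ hδ ht (ha.trans (le_of_lt hax))

lemma tendsto_evolvedTail_of_contDiff (h𝓕 : IsFourier 𝓕) {g : ℝ → ℂ} (hg : ContDiff ℝ 1 g)
    (hgc : HasCompactSupport g) (hg_neg : tsupport g ⊆ Iio 0) {f : H2} (hfg : f =ᵐ[volume] g)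
    (a : ℝ) : Tendsto (fun t => evolvedTail 𝓕 a t f) atTop (nhds 0) := by
  obtain ⟨δ, hδ, hgδ⟩ := exists_pos_subset_Iic_neg hgc.isCompact hg_neg
  have tendsto_tδ : Tendsto (fun t => t * δ) atTop atTop := tendsto_id.atTop_mul_const hδ
  obtain ⟨C, hC⟩ := exists_norm_evolvedTail_sq_le h𝓕 hg hgc hfg hgδ hδ
  have bound_tendsto : Tendsto (fun t => C * (a + 2 * t * δ)⁻¹) atTop (nhds 0) := by
    have : Tendsto (fun t => a + 2 * t * δ) atTop atTop := by
      simp_rw [mul_assoc]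
      exact tendsto_atTop_add_const_left _ a (tendsto_tδ.const_mul_atTop two_pos)
    simpa using this.inv_tendsto_atTop.const_mul C
  suffices sq_tendsto : Tendsto (fun t => ‖evolvedTail 𝓕 a t f‖ ^ 2) atTop (nhds 0) by
    simpa [tendsto_zero_iff_norm_tendsto_zero] using sq_tendsto.sqrt
  refine squeeze_zero' (.of_forall fun t => by positivity) ?_ bound_tendsto
  filter_upwards [eventually_gt_atTop 0, tendsto_tδ.eventually_ge_atTop (-a)] with t ht hta
  exact hC a t ht (by linarith)

lemma tendsto_evolvedTail (h𝓕 : IsFourier 𝓕) {f : H2}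
    (hf : ∀ᵐ k ∂volume.restrict (Ioi (0 : ℝ)), f k = 0) (a : ℝ) :
    Tendsto (fun t => evolvedTail 𝓕 a t f) atTop (nhds 0) := by
  refine mem_of_contDiff_mem_of_ae_eq_zero
    (isClosed_strongNullSpace (nnnorm_evolvedTail_le_one a) atTop)
    (isOpen_Iio (a := 0)) ?_ ?_
  · intro g hg hgc hg_neg G hG
    have tsupport_subset : tsupport (fun k => (g k : ℂ)) ⊆ tsupport g :=
      closure_mono (Function.support_comp_subset ofReal_zero g)
    exact tendsto_evolvedTail_of_contDiff h𝓕
      (ofRealCLM.contDiff.comp (hg.of_le (mod_cast le_top))) (hgc.comp_left ofReal_zero)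
      (tsupport_subset.trans hg_neg) hG a
  · rw [ae_restrict_iff' measurableSet_Ioi] at hf
    filter_upwards [hf, Measure.ae_ne volume (0 : ℝ)] with k hk hk0 hk_nonneg
    exact hk (lt_of_le_of_ne (not_lt.1 hk_nonneg) hk0.symm)

end FreeEvolution

/-- Let `φ ∈ L²(ℝ)` have only non-positive momenta, `(Fφ)(k) = 0` for
a.e. `k > 0`, and let `a ∈ ℝ`. With `φ_t := e^{-itH₀}φ = F*(e^{-itk²} Fφ)` the freely evolved
state, `∫_{[a,∞)} |φ_t(x)|² dx → 0` as `t → +∞`; that is,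
`s-lim_{t→∞} E^Q([a,∞)) e^{-itH₀} P̌₋ = 0`. -/
theorem statement11 (𝓕 : H2 ≃ₗᵢ[ℂ] H2) (h𝓕 : IsFourier 𝓕) (φ : H2)
    (hφ : ∀ᵐ k ∂(volume.restrict (Set.Ioi (0 : ℝ))), (𝓕 φ) k = 0) (a : ℝ) :
    Tendsto (fun t : ℝ => ∫ x in Set.Ici a,
        ‖(𝓕.symm (mulLp (fun k : ℝ => Complex.exp (-(Complex.I * t * k ^ 2))) (𝓕 φ))) x‖ ^ 2)
      atTop (nhds 0) := by
  have tail_sq_tendsto : Tendsto (fun t => ‖evolvedTail 𝓕 a t (𝓕 φ)‖ ^ 2) atTop (nhds 0) := by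
    simpa using (tendsto_evolvedTail h𝓕 hφ a).norm.pow 2
  exact tail_sq_tendsto.congr fun t => norm_evolvedTail_sq a t (𝓕 φ)
end
end
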